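/- arXiv:2309.02890 — 8 statements merged into one kernel-verified Lean document; each statement's English description precedes it below -/
import Mathlib

section
/- For every natural number n, in the group algebra ℂ[ℚ^{3(n+1)}] (i.e. AddMonoidAlgebra ℂ (Fin (3*(n+1)) →₀ ℚ), whose canonical basis monomials correspond to finitely supported functions Fin (3(n+1)) → ℚ), the ideal generated by the n+1 elements z_{3i} + z_{3i+1} + z_{3i+2} for i = 0, …, n — where z_j denotes the basis monomial corresponding to the finitely supported function sending j to 1 and everything else to 0 — is a prime ideal. -/
section
open Polynomial

/-- Eisenstein step over `K[Y][Z]`. -/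
theorem fermat_prime_field {K : Type*} [Field K] [CharZero K] (M : ℕ) (hM : 0 < M) (d : K)
    (hd : d ≠ 0) : Prime (X ^ M + C (X ^ M - C (d ^ M)) : K[X][X]) := by
  apply Irreducible.prime
  have hmon : (X ^ M + C (X ^ M - C (d ^ M)) : K[X][X]).Monic := monic_X_pow_add_C _ hM.ne'
  have hdeg : (X ^ M + C (X ^ M - C (d ^ M)) : K[X][X]).degree = M := degree_X_pow_add_C hM _
  have hroot : (X - C d : K[X]) ∣ X ^ M - C (d ^ M) := by
    rw [dvd_iff_isRoot]; simp
  refine irreducible_of_eisenstein_criterion (P := Ideal.span {(X - C d : K[X])}) ?_ ?_ ?_ ?_ ?_ ?_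
  · rw [Ideal.span_singleton_prime (X_sub_C_ne_zero d)]
    exact prime_X_sub_C d
  · rw [hmon.leadingCoeff, Ideal.mem_span_singleton]
    exact fun h => (prime_X_sub_C d).not_isUnit (isUnit_of_dvd_one h)
  · intro k hk
    rw [hdeg] at hk
    have hk' : k < M := by exact_mod_cast hk
    rw [Ideal.mem_span_singleton, coeff_add, coeff_X_pow, if_neg hk'.ne, zero_add, coeff_C]
    split_ifs
    · exact hroot
    · exact dvd_zero _
  · rw [hdeg]; exact_mod_cast hM
  · rw [Ideal.span_singleton_pow, Ideal.mem_span_singleton, coeff_add, coeff_X_pow,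
      if_neg hM.ne, zero_add, coeff_C_zero]
    rintro ⟨q, hq⟩
    have h := congrArg (fun p => (derivative p).eval d) hq
    simp [derivative_mul, derivative_pow] at h
    rcases h with h | h
    · exact hM.ne' h
    · exact hd h.1
  · exact hmon.isPrimitive

/-- primality of monic polynomials descends along injective maps. -/
theorem prime_of_map_prime {A B : Type*} [CommRing A] [IsDomain A] [CommRing B]
    (f : A →+* B) (hf : Function.Injective f) (p : A[X]) (hp : p.Monic)
    (h : Prime (p.map f)) : Prime p := by
  refine ⟨hp.ne_zero, fun hu => h.not_isUnit (hu.map (mapRingHom f)), fun a b hab => ?_⟩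
  have : p.map f ∣ a.map f * b.map f := by
    rw [← Polynomial.map_mul]; exact (map_dvd_map f hf hp).2 hab
  exact (h.dvd_or_dvd this).imp (map_dvd_map f hf hp).1 (map_dvd_map f hf hp).1

theorem fermat_prime {D : Type*} [CommRing D] [IsDomain D] [Algebra ℂ D] (M : ℕ) (hM : 0 < M) :
    Prime (MvPolynomial.X 0 ^ M + MvPolynomial.X 1 ^ M + MvPolynomial.X 2 ^ M :
      MvPolynomial (Fin 3) D) := by
  obtain ⟨ζ, hζ⟩ := IsAlgClosed.exists_pow_nat_eq (-1 : ℂ) hM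
  have hζ0 : ζ ≠ 0 := by rintro rfl; simp [hM.ne'] at hζ
  let T := MvPolynomial (Fin 1) D
  let K := FractionRing T
  let ι : T →+* K := algebraMap T K
  have hι : Function.Injective ι := IsFractionRing.injective T K
  let ψ : MvPolynomial (Fin 2) D →+* K[X] :=
    (mapRingHom ι).comp (MvPolynomial.finSuccEquiv D 1 : _ →+* _)
  have hψ : Function.Injective ψ := by
    intro a b hab
    exact (MvPolynomial.finSuccEquiv D 1).injective (map_injective ι hι hab)
  rw [← MulEquiv.prime_iff (MvPolynomial.finSuccEquiv D 2)]
  have e : MvPolynomial.finSuccEquiv D 2 (MvPolynomial.X 0 ^ M + MvPolynomial.X 1 ^ M + MvPolynomial.X 2 ^ M) = X ^ M + C (MvPolynomial.X 0 ^ M + MvPolynomial.X 1 ^ M) := by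
    have h1 := MvPolynomial.finSuccEquiv_X_succ (R := D) (j := (0 : Fin 2))
    have h2 := MvPolynomial.finSuccEquiv_X_succ (R := D) (j := (1 : Fin 2))
    simp only [Fin.succ_zero_eq_one, Fin.succ_one_eq_two] at h1 h2
    have h0 := MvPolynomial.finSuccEquiv_X_zero (R := D) (n := 2)
    simp only [map_add, map_pow, h0, h1, h2, add_assoc]
  have e' := congrArg Prime e
  refine (iff_of_eq e').2 ?_
  refine prime_of_map_prime ψ hψ _ (monic_X_pow_add_C _ hM.ne') ?_
  let _ : Algebra ℂ K := (ι.comp (algebraMap ℂ T)).toAlgebra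
  have : CharZero K := charZero_of_injective_algebraMap (algebraMap ℂ K).injective
  have := fermat_prime_field (K := K) M hM (algebraMap ℂ K ζ * ι (MvPolynomial.X 0))
    (mul_ne_zero (by simpa using hζ0) (by
      rw [Ne, map_eq_zero_iff ι hι]; exact MvPolynomial.X_ne_zero _))
  convert this using 1
  have h1 := MvPolynomial.finSuccEquiv_X_succ (R := D) (j := (0 : Fin 1))
  simp only [Fin.succ_zero_eq_one] at h1
  have h0 := MvPolynomial.finSuccEquiv_X_zero (R := D) (n := 1)
  have g0 : ψ (MvPolynomial.X 0) = X := by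
    change map ι (MvPolynomial.finSuccEquiv D 1 (MvPolynomial.X 0)) = X
    rw [h0, map_X]
  have g1 : ψ (MvPolynomial.X 1) = C (ι (MvPolynomial.X 0)) := by
    change map ι (MvPolynomial.finSuccEquiv D 1 (MvPolynomial.X 1)) = _
    rw [h1, map_C]
  have g2 : (algebraMap ℂ K ζ) ^ M = -1 := by rw [← map_pow, hζ]; simp
  rw [Polynomial.map_add, Polynomial.map_pow, map_X, map_C, map_add, map_pow, map_pow, g0, g1,
    mul_pow, g2, ← C_pow]
  simp

end

/-- The element `x + y + z` of `D[ℚ³]`. -/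
noncomputable def triSum (D : Type*) [CommRing D] : AddMonoidAlgebra D (Fin 3 →₀ ℚ) :=
  AddMonoidAlgebra.single (Finsupp.single 0 1) 1 + AddMonoidAlgebra.single (Finsupp.single 1 1) 1
    + AddMonoidAlgebra.single (Finsupp.single 2 1) 1

/-- Scaling of exponents `v ↦ v / M`. -/
noncomputable def scaleHom (M : ℕ) : (Fin 3 →₀ ℕ) →+ (Fin 3 →₀ ℚ) :=
  Finsupp.mapRange.addMonoidHom
    ((AddMonoidHom.mulRight ((M : ℚ)⁻¹)).comp (Nat.castAddMonoidHom ℚ))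

theorem scaleHom_apply (M : ℕ) (v : Fin 3 →₀ ℕ) (i : Fin 3) :
    scaleHom M v i = v i * (M : ℚ)⁻¹ := by
  simp [scaleHom]

theorem scaleHom_injective (M : ℕ) (hM : 0 < M) : Function.Injective (scaleHom M) := by
  intro v w h
  ext i
  have := DFunLike.congr_fun h i
  rw [scaleHom_apply, scaleHom_apply] at this
  have hM' : (M : ℚ)⁻¹ ≠ 0 := by positivity
  exact_mod_cast mul_right_cancel₀ hM' this

theorem exists_scale (F : Finset (Fin 3 →₀ ℚ)) : ∃ M : ℕ, 0 < M ∧ ∃ w ∈ Set.range (scaleHom M),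
    ∀ v ∈ F, w + v ∈ Set.range (scaleHom M) := by
  classical
  let M : ℕ := ∏ v ∈ F, ∏ i, (v i).den
  let W : ℕ := ∑ v ∈ F, ∑ i, (v i).num.natAbs
  have hM : 0 < M := Finset.prod_pos fun v _ => Finset.prod_pos fun i _ => (v i).den_pos
  have hMQ : (M : ℚ) ≠ 0 := by positivity
  refine ⟨M, hM, Finsupp.equivFunOnFinite.symm fun _ => (W : ℚ), ?_, ?_⟩
  · refine ⟨Finsupp.equivFunOnFinite.symm fun _ => W * M, ?_⟩
    ext i
    rw [scaleHom_apply]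
    simp [hMQ]
  · intro v hv
    have key : ∀ i, ∃ k : ℕ, (k : ℚ) * (M : ℚ)⁻¹ = W + v i := by
      intro i
      have hd : (v i).den ∣ M :=
        (Finset.dvd_prod_of_mem (fun i => (v i).den) (Finset.mem_univ i)).trans
          (Finset.dvd_prod_of_mem (fun v : Fin 3 →₀ ℚ => ∏ i, (v i).den) hv)
      have hW : (v i).num.natAbs ≤ W :=
        (Finset.single_le_sum (f := fun i => (v i).num.natAbs) (fun _ _ => Nat.zero_le _)
          (Finset.mem_univ i)).trans
          (Finset.single_le_sum (f := fun v : Fin 3 →₀ ℚ => ∑ i, (v i).num.natAbs)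
            (fun _ _ => Nat.zero_le _) hv)
      obtain ⟨k, hk⟩ := hd
      have hden := (v i).den_pos
      have hnn : 0 ≤ (v i).num + (v i).den * W := by
        have h1 : (W : ℤ) ≤ (v i).den * W := by
          have : W ≤ (v i).den * W := Nat.le_mul_of_pos_left _ hden
          exact_mod_cast this
        omega
      obtain ⟨j, hj⟩ := Int.eq_ofNat_of_zero_le hnn
      refine ⟨k * j, ?_⟩
      have hjQ : ((v i).num : ℚ) + (v i).den * W = j := by exact_mod_cast hj
      have hkQ : (M : ℚ) = (v i).den * k := by exact_mod_cast hk
      have hdQ : ((v i).den : ℚ) ≠ 0 := by positivity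
      have hk0 : (k : ℚ) ≠ 0 := by
        intro h; rw [h, mul_zero] at hkQ; exact hMQ hkQ
      have hv' : v i * (v i).den = (v i).num := Rat.mul_den_eq_num _
      rw [hkQ]
      push_cast
      rw [← hjQ, ← hv']
      field_simp
      ring
    choose k hk using key
    refine ⟨Finsupp.equivFunOnFinite.symm k, ?_⟩
    ext i
    rw [scaleHom_apply]
    simpa using hk i

theorem exists_preimage {D : Type*} [CommRing D] (M : ℕ) (hM : 0 < M)
    (w : Fin 3 →₀ ℚ) (f : AddMonoidAlgebra D (Fin 3 →₀ ℚ))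
    (hf : ∀ v ∈ f.coeff.support, w + v ∈ Set.range (scaleHom M)) :
    ∃ f' : MvPolynomial (Fin 3) D,
      AddMonoidAlgebra.mapDomainRingHom D (scaleHom M) f' = AddMonoidAlgebra.single w 1 * f := by
  refine ⟨AddMonoidAlgebra.comapDomain (scaleHom M) (scaleHom_injective M hM) _,
    AddMonoidAlgebra.mapDomain_comapDomain ?_ _⟩
  intro v hv
  have hv' : v - w ∈ f.coeff.support := by
    rw [Finset.mem_coe, Finsupp.mem_support_iff] at hv
    rw [Finsupp.mem_support_iff]
    intro h
    apply hv
    have : v = w + (v - w) := by abel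
    rw [this, AddMonoidAlgebra.coeff_single_mul_add]
    simpa using h
  have := hf _ hv'
  rwa [add_sub_cancel] at this

theorem isUnit_mono {D G : Type*} [CommRing D] [AddCommGroup G] (w : G) :
    IsUnit (AddMonoidAlgebra.single w (1 : D)) := by
  refine IsUnit.of_mul_eq_one (AddMonoidAlgebra.single (-w) (1 : D)) ?_
  simp [AddMonoidAlgebra.single_mul_single, AddMonoidAlgebra.one_def]

theorem scale_fermat {D : Type*} [CommRing D] (M : ℕ) (hM : 0 < M) :
    AddMonoidAlgebra.mapDomainRingHom D (scaleHom M)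
      (MvPolynomial.X 0 ^ M + MvPolynomial.X 1 ^ M + MvPolynomial.X 2 ^ M :
      MvPolynomial (Fin 3) D) = triSum D := by
  have h : ∀ i : Fin 3, AddMonoidAlgebra.mapDomainRingHom D (scaleHom M)
      (MvPolynomial.X i ^ M : MvPolynomial (Fin 3) D)
        = AddMonoidAlgebra.single (Finsupp.single i 1) 1 := by
    intro i
    rw [MvPolynomial.X_pow_eq_monomial]
    refine (AddMonoidAlgebra.mapDomain_single ..).trans ?_
    congr 1
    have hMQ : (M : ℚ) ≠ 0 := by positivity
    simp [scaleHom, hMQ]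
  rw [map_add, map_add, h, h, h, triSum]

theorem triSum_ne_zero (D : Type*) [CommRing D] [Nontrivial D] : triSum D ≠ 0 := by
  intro h
  have := congrArg (fun f => f.coeff (Finsupp.single 0 1)) h
  simp [triSum, Finsupp.single_eq_single_iff] at this

theorem triSum_prime (D : Type*) [CommRing D] [IsDomain D] [Algebra ℂ D] : Prime (triSum D) := by
  classical
  have main : ∀ f g h : AddMonoidAlgebra D (Fin 3 →₀ ℚ), f * g = triSum D * h →
      ∃ M : ℕ, 0 < M ∧ ∃ w w₂ : Fin 3 →₀ ℚ, ∃ f' g' h' : MvPolynomial (Fin 3) D,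
        AddMonoidAlgebra.mapDomainRingHom D (scaleHom M) f' = AddMonoidAlgebra.single w 1 * f ∧
        AddMonoidAlgebra.mapDomainRingHom D (scaleHom M) g' = AddMonoidAlgebra.single w 1 * g ∧
        AddMonoidAlgebra.mapDomainRingHom D (scaleHom M) h' = AddMonoidAlgebra.single w₂ 1 * h ∧
        f' * g' = (MvPolynomial.X 0 ^ M + MvPolynomial.X 1 ^ M + MvPolynomial.X 2 ^ M) * h' := by
    intro f g h hfg
    obtain ⟨M, hM, w, hw, hF⟩ :=
      exists_scale (f.coeff.support ∪ g.coeff.support ∪ h.coeff.support)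
    obtain ⟨f', hf'⟩ := exists_preimage M hM w f fun v hv => hF v (by simp only [Finset.mem_union]; tauto)
    obtain ⟨g', hg'⟩ := exists_preimage M hM w g fun v hv => hF v (by simp only [Finset.mem_union]; tauto)
    obtain ⟨h', hh'⟩ := exists_preimage M hM (w + w) h fun v hv => by
      obtain ⟨a, ha⟩ := hw
      obtain ⟨b, hb⟩ := hF v (by simp only [Finset.mem_union]; tauto)
      exact ⟨a + b, by rw [map_add, ha, hb, add_assoc]⟩
    refine ⟨M, hM, w, w + w, f', g', h', hf', hg', hh', ?_⟩
    apply AddMonoidAlgebra.mapDomain_injective (scaleHom_injective M hM)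
    change AddMonoidAlgebra.mapDomainRingHom D (scaleHom M) _
      = AddMonoidAlgebra.mapDomainRingHom D (scaleHom M) _
    rw [map_mul, map_mul, hf', hg', hh', scale_fermat M hM, mul_mul_mul_comm, hfg,
      AddMonoidAlgebra.single_mul_single]
    rw [one_mul]; ring
  have pull : ∀ (M : ℕ) (_ : 0 < M) (w : Fin 3 →₀ ℚ) (f : AddMonoidAlgebra D (Fin 3 →₀ ℚ))
      (f' : MvPolynomial (Fin 3) D),
      AddMonoidAlgebra.mapDomainRingHom D (scaleHom M) f' = AddMonoidAlgebra.single w 1 * f →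
      (MvPolynomial.X 0 ^ M + MvPolynomial.X 1 ^ M + MvPolynomial.X 2 ^ M) ∣ f' →
      triSum D ∣ f := by
    intro M hM w f f' hf hd
    have := map_dvd (AddMonoidAlgebra.mapDomainRingHom D (scaleHom M)) hd
    rwa [scale_fermat M hM, hf, (isUnit_mono w).dvd_mul_left] at this
  refine ⟨triSum_ne_zero D, ?_, ?_⟩
  · intro hu
    -- specialise at a point of the torus where `x + y + z` vanishes
    let χ : Multiplicative (Fin 3 →₀ ℚ) →* D :=
      { toFun := fun v => algebraMap ℂ D (Complex.exp ((v.toAdd 2 : ℚ) * Complex.log (-2)))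
        map_one' := by simp
        map_mul' := fun a b => by
          rw [← map_mul, ← Complex.exp_add]
          simp [add_mul] }
    have h0 : AddMonoidAlgebra.lift D D (Fin 3 →₀ ℚ) χ (triSum D) = 0 := by
      simp only [triSum, map_add, AddMonoidAlgebra.lift_single]
      simp [χ, Complex.exp_log]
      rw [map_ofNat]; ring
    have := hu.map (AddMonoidAlgebra.lift D D (Fin 3 →₀ ℚ) χ)
    rw [h0] at this
    exact not_isUnit_zero this
  · rintro f g ⟨h, hh⟩
    obtain ⟨M, hM, w, w₂, f', g', h', hf', hg', hh', e⟩ := main f g h hh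
    rcases (fermat_prime (D := D) M hM).dvd_or_dvd ⟨h', e⟩ with hd | hd
    · exact Or.inl (pull M hM w f f' hf' hd)
    · exact Or.inr (pull M hM w g g' hg' hd)

theorem step_prime {R : Type*} [CommRing R] [Algebra ℂ R] (J : Ideal R) [J.IsPrime] :
    (J.map (AddMonoidAlgebra.singleZeroRingHom : R →+* AddMonoidAlgebra R (Fin 3 →₀ ℚ))
      ⊔ Ideal.span {triSum R}).IsPrime := by
  let π : R →+* R ⧸ J := Ideal.Quotient.mk J
  let Φ : AddMonoidAlgebra R (Fin 3 →₀ ℚ) →+* AddMonoidAlgebra (R ⧸ J) (Fin 3 →₀ ℚ) :=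
    AddMonoidAlgebra.mapRingHom _ π
  have hΦ : Function.Surjective Φ :=
    AddMonoidAlgebra.map_surjective (π : R →+ R ⧸ J) Ideal.Quotient.mk_surjective
  have hker : Ideal.comap Φ ⊥
      = J.map (AddMonoidAlgebra.singleZeroRingHom : R →+* AddMonoidAlgebra R (Fin 3 →₀ ℚ)) := by
    apply le_antisymm
    · intro f hf
      rw [Ideal.mem_comap, Ideal.mem_bot] at hf
      have hc : ∀ v, f.coeff v ∈ J := by
        intro v
        have := congrArg (fun g => g.coeff v) hf
        simpa [Φ, π, AddMonoidAlgebra.mapRingHom, Ideal.Quotient.eq_zero_iff_mem] using this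
      rw [← AddMonoidAlgebra.sum_coeff_single f]
      refine Ideal.sum_mem _ fun v _ => ?_
      have : AddMonoidAlgebra.single v (f.coeff v) = AddMonoidAlgebra.single v 1 *
          (AddMonoidAlgebra.singleZeroRingHom (f.coeff v) :
            AddMonoidAlgebra R (Fin 3 →₀ ℚ)) := by
        simp [AddMonoidAlgebra.single_mul_single]
      rw [this]
      exact Ideal.mul_mem_left _ _ (Ideal.mem_map_of_mem _ (hc v))
    · rw [Ideal.map_le_iff_le_comap]
      intro r hr
      rw [Ideal.mem_comap, Ideal.mem_comap, Ideal.mem_bot]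
      have : π r = 0 := Ideal.Quotient.eq_zero_iff_mem.2 hr
      simp [Φ, this]
  have hs : Φ (triSum R) = triSum (R ⧸ J) := by
    simp [Φ, triSum]
  have hp : (Ideal.span {triSum (R ⧸ J)}).IsPrime :=
    (Ideal.span_singleton_prime (triSum_ne_zero _)).2 (triSum_prime _)
  have := Ideal.comap_map_of_surjective Φ hΦ (Ideal.span {triSum R})
  rw [Ideal.map_span, Set.image_singleton, hs, hker, sup_comm] at this
  rw [← this]
  exact Ideal.IsPrime.comap Φ

/-- The `i`-th generator in `ℂ[(ℚ³)^n]`. -/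
noncomputable def triGen (n : ℕ) (i : Fin n) :
    AddMonoidAlgebra ℂ (Fin n → (Fin 3 →₀ ℚ)) :=
  AddMonoidAlgebra.single (Pi.single i (Finsupp.single 0 1)) 1 +
  AddMonoidAlgebra.single (Pi.single i (Finsupp.single 1 1)) 1 +
  AddMonoidAlgebra.single (Pi.single i (Finsupp.single 2 1)) 1

/-- Splitting off the first coordinate. -/
def consAdd (n : ℕ) (V : Type*) [AddCommGroup V] : (Fin (n + 1) → V) ≃+ V × (Fin n → V) where
  toFun f := (f 0, fun i => f i.succ)
  invFun p := Fin.cons p.1 p.2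
  left_inv f := by
    ext i; refine Fin.cases ?_ (fun j => ?_) i <;> simp
  right_inv p := by simp
  map_add' f g := rfl

theorem consAdd_single_zero (n : ℕ) (V : Type*) [AddCommGroup V] (v : V) :
    consAdd n V (Pi.single 0 v) = (v, 0) := by
  ext i
  · simp [consAdd]
  · simp [consAdd]

theorem consAdd_single_succ (n : ℕ) (V : Type*) [AddCommGroup V] (i : Fin n) (v : V) :
    consAdd n V (Pi.single i.succ v) = (0, Pi.single i v) := by
  refine Prod.ext ?_ (funext fun j => ?_)
  · simp [consAdd]
  · simp [consAdd, Pi.single_apply]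

theorem prime_span_of_equiv {A B : Type*} [CommRing A] [CommRing B] (e : A ≃+* B) (S : Set A)
    (T : Set B) (hT : (Ideal.span T).IsPrime) (h : Set.image e S = T) : (Ideal.span S).IsPrime := by
  have : Ideal.span S = (Ideal.span T).comap e := by
    rw [← h, ← Ideal.map_span, Ideal.comap_map_of_bijective _ e.bijective]
  rw [this]
  exact Ideal.IsPrime.comap _

theorem triGen_prime (n : ℕ) : (Ideal.span (Set.range (triGen n))).IsPrime := by
  induction n with
  | zero =>
    have : IsDomain (AddMonoidAlgebra ℂ (Fin 0 → (Fin 3 →₀ ℚ))) := NoZeroDivisors.to_isDomain _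
    rw [Set.range_eq_empty, Ideal.span_empty]
    exact Ideal.isPrime_bot
  | succ n ih =>
    let e : AddMonoidAlgebra ℂ (Fin (n + 1) → (Fin 3 →₀ ℚ)) ≃+*
        AddMonoidAlgebra (AddMonoidAlgebra ℂ (Fin n → (Fin 3 →₀ ℚ))) (Fin 3 →₀ ℚ) :=
      (AddMonoidAlgebra.mapDomainRingEquiv ℂ (consAdd n (Fin 3 →₀ ℚ))).trans
        AddMonoidAlgebra.curryRingEquiv
    have e0 : e (triGen (n + 1) 0) = triSum _ := by
      simp [e, triGen, triSum, consAdd_single_zero, AddMonoidAlgebra.one_def]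
    have es : ∀ i : Fin n, e (triGen (n + 1) i.succ)
        = AddMonoidAlgebra.singleZeroRingHom (triGen n i) := by
      intro i
      simp [e, triGen, consAdd_single_succ]
    have := step_prime (Ideal.span (Set.range (triGen n)))
    rw [Ideal.map_span, ← Ideal.span_union] at this
    refine prime_span_of_equiv e _ _ this ?_
    ext x
    constructor
    · rintro ⟨_, ⟨i, rfl⟩, rfl⟩
      refine Fin.cases ?_ (fun j => ?_) i
      · exact Or.inr e0
      · exact Or.inl ⟨_, ⟨j, rfl⟩, (es j).symm⟩
    · rintro (⟨_, ⟨j, rfl⟩, rfl⟩ | h)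
      · exact ⟨_, ⟨j.succ, rfl⟩, es j⟩
      · exact ⟨_, ⟨0, rfl⟩, e0.trans h.symm⟩

/-- The index bijection. -/
def idxEquiv (n : ℕ) : Fin (3 * (n + 1)) ≃ Fin (n + 1) × Fin 3 :=
  (finCongr (Nat.mul_comm 3 (n + 1))).trans finProdFinEquiv.symm

/-- Grouping the coordinates in triples. -/
noncomputable def groupAdd (n : ℕ) :
    (Fin (3 * (n + 1)) →₀ ℚ) ≃+ (Fin (n + 1) → (Fin 3 →₀ ℚ)) :=
  ((Finsupp.domCongr (idxEquiv n)).trans Finsupp.curryAddEquiv).trans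
    (Finsupp.linearEquivFunOnFinite ℚ (Fin 3 →₀ ℚ) (Fin (n + 1))).toAddEquiv

theorem groupAdd_single (n : ℕ) (j : Fin (3 * (n + 1))) (i : Fin (n + 1)) (k : Fin 3)
    (h : j.val = 3 * i.val + k.val) (q : ℚ) :
    groupAdd n (Finsupp.single j q) = Pi.single i (Finsupp.single k q) := by
  have hj : idxEquiv n j = (i, k) := by
    rw [← Equiv.eq_symm_apply]
    ext
    simp [idxEquiv, h]
    omega
  simp [groupAdd, hj]


/-- For every `n`, in the group algebra `ℂ[ℚ^(3(n+1))]`, the ideal generated by the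
`n+1` elements `z_{3i} + z_{3i+1} + z_{3i+2}` (for `i = 0, …, n`) is prime, where `z j`
is the basis monomial corresponding to the `j`-th standard basis vector. -/
theorem stmt0 (n : ℕ) :
    (Ideal.span {p : AddMonoidAlgebra ℂ (Fin (3 * (n + 1)) →₀ ℚ) |
        ∃ i : Fin (n + 1), p =
          AddMonoidAlgebra.single
            (Finsupp.single (⟨3 * i.val, by have := i.isLt; omega⟩ : Fin (3 * (n + 1))) (1 : ℚ)) (1 : ℂ) +
          AddMonoidAlgebra.single
            (Finsupp.single (⟨3 * i.val + 1, by have := i.isLt; omega⟩ : Fin (3 * (n + 1))) (1 : ℚ)) (1 : ℂ) +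
          AddMonoidAlgebra.single
            (Finsupp.single (⟨3 * i.val + 2, by have := i.isLt; omega⟩ : Fin (3 * (n + 1))) (1 : ℚ)) (1 : ℂ)}).IsPrime := by
  let e := AddMonoidAlgebra.mapDomainRingEquiv ℂ (groupAdd n)
  have key : ∀ i : Fin (n + 1), e (
          AddMonoidAlgebra.single
            (Finsupp.single (⟨3 * i.val, by have := i.isLt; omega⟩ : Fin (3 * (n + 1))) (1 : ℚ)) (1 : ℂ) +
          AddMonoidAlgebra.single
            (Finsupp.single (⟨3 * i.val + 1, by have := i.isLt; omega⟩ : Fin (3 * (n + 1))) (1 : ℚ)) (1 : ℂ) +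
          AddMonoidAlgebra.single
            (Finsupp.single (⟨3 * i.val + 2, by have := i.isLt; omega⟩ : Fin (3 * (n + 1))) (1 : ℚ)) (1 : ℂ))
        = triGen (n + 1) i := by
    intro i
    simp only [e, map_add, AddMonoidAlgebra.mapDomainRingEquiv_single, triGen]
    rw [groupAdd_single n _ i 0 (by simp), groupAdd_single n _ i 1 (by simp),
      groupAdd_single n _ i 2 (by simp)]
  refine prime_span_of_equiv e _ _ (triGen_prime (n + 1)) ?_
  ext x
  constructor
  · rintro ⟨_, ⟨i, rfl⟩, rfl⟩
    exact ⟨i, (key i).symm⟩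
  · rintro ⟨i, rfl⟩
    exact ⟨_, ⟨i, rfl⟩, key i⟩
end

section
/- In the group algebra ℂ[ℚ^3] (i.e. AddMonoidAlgebra ℂ (Fin 3 →₀ ℚ)), the ideal generated by the single element z₀ + z₁ + z₂ — where z_j denotes the basis monomial corresponding to the finitely supported function sending j to 1 and everything else to 0 — is a prime ideal. -/
/-- Exponent scaling `e ↦ e / N`. -/
noncomputable def expScale (N : ℕ) : (Fin 3 →₀ ℕ) →+ (Fin 3 →₀ ℚ) :=
  Finsupp.mapRange.addMonoidHom ((AddMonoidHom.mulRight ((N : ℚ)⁻¹)).comp (Nat.castAddMonoidHom ℚ))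

lemma expScale_apply (N : ℕ) (e : Fin 3 →₀ ℕ) (i : Fin 3) :
    expScale N e i = (e i : ℚ) * (N : ℚ)⁻¹ := by
  simp [expScale]

lemma expScale_injective (N : ℕ) (hN : 0 < N) : Function.Injective (expScale N) := by
  intro a b h
  ext i
  have h1 := DFunLike.congr_fun h i
  rw [expScale_apply, expScale_apply] at h1
  have : (N : ℚ)⁻¹ ≠ 0 := by positivity
  exact_mod_cast mul_right_cancel₀ this h1

/-- The embedding `X i ↦ z i ^ (1 / N)`. -/
noncomputable def polyEmb (N : ℕ) :
    AddMonoidAlgebra ℂ (Fin 3 →₀ ℕ) →+* AddMonoidAlgebra ℂ (Fin 3 →₀ ℚ) :=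
  AddMonoidAlgebra.mapDomainRingHom ℂ (expScale N)

lemma polyEmb_single (N : ℕ) (e : Fin 3 →₀ ℕ) (c : ℂ) :
    polyEmb N (AddMonoidAlgebra.single e c) = AddMonoidAlgebra.single (expScale N e) c := by
  simp [polyEmb]

lemma polyEmb_injective (N : ℕ) (hN : 0 < N) : Function.Injective (polyEmb N) := by
  have := AddMonoidAlgebra.mapDomain_injective (R := ℂ) (expScale_injective N hN)
  intro a b h
  exact this (by simpa [polyEmb] using h)

/-- The exponent vector `(k, k, k)`. -/
noncomputable def diagVec (k : ℕ) : Fin 3 →₀ ℚ := Finsupp.equivFunOnFinite.symm fun _ => (k : ℚ)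

lemma exists_range (a : AddMonoidAlgebra ℂ (Fin 3 →₀ ℚ)) :
    ∃ N₀ k₀ : ℕ, 0 < N₀ ∧ ∀ N, 0 < N → N₀ ∣ N → ∀ k, k₀ ≤ k →
      ∃ A, polyEmb N A = AddMonoidAlgebra.single (diagVec k) 1 * a := by
  induction a using AddMonoidAlgebra.induction_linear with
  | zero => exact ⟨1, 0, one_pos, fun N _ _ k _ => ⟨0, by simp⟩⟩
  | add x y hx hy =>
    obtain ⟨N1, k1, h1, H1⟩ := hx
    obtain ⟨N2, k2, h2, H2⟩ := hy
    refine ⟨N1 * N2, max k1 k2, by positivity, fun N hN hd k hk => ?_⟩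
    obtain ⟨A, hA⟩ := H1 N hN ((dvd_mul_right _ _).trans hd) k ((le_max_left _ _).trans hk)
    obtain ⟨B, hB⟩ := H2 N hN ((dvd_mul_left _ _).trans hd) k ((le_max_right _ _).trans hk)
    exact ⟨A + B, by rw [map_add, hA, hB, mul_add]⟩
  | single m r =>
    refine ⟨∏ i, (m i).den, ∑ i, (m i).num.natAbs, Finset.prod_pos fun i _ => (m i).den_pos,
      fun N hN hd k hk => ?_⟩
    have key : ∀ i, ∃ e : ℕ, (e : ℚ) = (k + m i) * N := by
      intro i
      obtain ⟨t, ht⟩ := (Finset.dvd_prod_of_mem (fun i => (m i).den) (Finset.mem_univ i)).trans hd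
      have hki : (m i).num.natAbs ≤ k :=
        (Finset.single_le_sum (f := fun i => (m i).num.natAbs) (fun _ _ => Nat.zero_le _)
          (Finset.mem_univ i)).trans hk
      have hmul : (m i) * ((m i).den : ℚ) = (m i).num := Rat.mul_den_eq_num _
      have hden : (1 : ℤ) ≤ (m i).den := by exact_mod_cast (m i).den_pos
      have hnn : 0 ≤ ((k : ℤ) * (m i).den + (m i).num) := by
        have : (k : ℤ) ≤ k * (m i).den := le_mul_of_one_le_right (by positivity) hden
        omega
      refine ⟨((k : ℤ) * (m i).den + (m i).num).toNat * t, ?_⟩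
      have h3 : ((((k : ℤ) * (m i).den + (m i).num).toNat : ℕ) : ℚ)
          = (k : ℚ) * (m i).den + (m i).num := by
        have := Int.toNat_of_nonneg hnn
        exact_mod_cast congrArg (Int.cast : ℤ → ℚ) this
      rw [Nat.cast_mul, h3, ht]
      push_cast
      rw [← hmul]; ring
    choose e he using key
    refine ⟨AddMonoidAlgebra.single (Finsupp.equivFunOnFinite.symm e) r, ?_⟩
    rw [polyEmb_single, AddMonoidAlgebra.single_mul_single, one_mul]
    congr 1
    ext i
    have : (N : ℚ) ≠ 0 := by positivity
    rw [expScale_apply]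
    simp [diagVec, he, this]

open MvPolynomial in
lemma fermat_prime_s1 (N : ℕ) (hN : 0 < N) :
    Prime (X 0 ^ N + X 1 ^ N + X 2 ^ N : MvPolynomial (Fin 3) ℂ) := by
  rw [← MulEquiv.prime_iff (finSuccEquiv ℂ 2)]
  set g : MvPolynomial (Fin 2) ℂ := X 0 ^ N + X 1 ^ N with hg
  have hF : finSuccEquiv ℂ 2 (X 0 ^ N + X 1 ^ N + X 2 ^ N)
      = Polynomial.X ^ N + Polynomial.C g := by
    have h1 : finSuccEquiv ℂ 2 (X 1) = Polynomial.C (X 0) := finSuccEquiv_X_succ (j := 0)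
    have h2 : finSuccEquiv ℂ 2 (X 2) = Polynomial.C (X 1) := finSuccEquiv_X_succ (j := 1)
    simp only [map_add, map_pow, finSuccEquiv_X_zero, h1, h2, hg]
    ring
  rw [hF]
  apply Irreducible.prime
  obtain ⟨ζ, hζ⟩ := IsAlgClosed.exists_pow_nat_eq (-1 : ℂ) hN
  have hζ0 : ζ ≠ 0 := by
    rintro rfl
    rw [zero_pow hN.ne'] at hζ
    norm_num at hζ
  let ev : MvPolynomial (Fin 2) ℂ →+* ℂ := eval ![ζ, 1]
  have hmon : (Polynomial.X ^ N + Polynomial.C g).Monic := Polynomial.monic_X_pow_add_C g hN.ne'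
  have hdeg : (Polynomial.X ^ N + Polynomial.C g).natDegree = N := Polynomial.natDegree_X_pow_add_C
  have hP : (RingHom.ker ev).IsPrime := RingHom.ker_isPrime ev
  have hgP : g ∈ RingHom.ker ev := by
    simp [RingHom.mem_ker, ev, hg, hζ]
  have hD : ∀ x ∈ RingHom.ker ev ^ 2, ev (pderiv 0 x) = 0 := by
    intro x hx
    rw [pow_two] at hx
    refine Submodule.mul_induction_on hx ?_ ?_
    · intro a ha b hb
      rw [RingHom.mem_ker] at ha hb
      simp [Derivation.leibniz, ha, hb]
    · intro a b ha hb
      simp [ha, hb]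
  refine Polynomial.IsEisensteinAt.irreducible (𝓟 := RingHom.ker ev) ⟨?_, ?_, ?_⟩ hP
    hmon.isPrimitive (by omega)
  · rw [hmon.leadingCoeff]
    exact fun h => hP.ne_top ((Ideal.eq_top_iff_one _).2 h)
  · intro n hn
    rw [hdeg] at hn
    rw [Polynomial.coeff_add, Polynomial.coeff_X_pow, if_neg hn.ne, zero_add, Polynomial.coeff_C]
    split_ifs
    · exact hgP
    · exact zero_mem _
  · intro h
    rw [Polynomial.coeff_add, Polynomial.coeff_X_pow, if_neg hN.ne, zero_add,
      Polynomial.coeff_C_zero] at h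
    have := hD g h
    simp [hg, ev, Derivation.leibniz_pow, pderiv_X, hζ0, hN.ne'] at this

open AddMonoidAlgebra in
/-- In the group algebra ℂ[ℚ³], the ideal generated by `z₀ + z₁ + z₂` is prime,
where `z j` is the basis monomial corresponding to the `j`-th standard basis vector. -/
theorem stmt1 :
    (Ideal.span
      { AddMonoidAlgebra.single (Finsupp.single (0 : Fin 3) (1 : ℚ)) (1 : ℂ) +
        AddMonoidAlgebra.single (Finsupp.single (1 : Fin 3) (1 : ℚ)) (1 : ℂ) +
        AddMonoidAlgebra.single (Finsupp.single (2 : Fin 3) (1 : ℚ)) (1 : ℂ) } :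
      Ideal (AddMonoidAlgebra ℂ (Fin 3 →₀ ℚ))).IsPrime := by
  set f : AddMonoidAlgebra ℂ (Fin 3 →₀ ℚ) :=
    AddMonoidAlgebra.single (Finsupp.single (0 : Fin 3) (1 : ℚ)) (1 : ℂ) +
    AddMonoidAlgebra.single (Finsupp.single (1 : Fin 3) (1 : ℚ)) (1 : ℂ) +
    AddMonoidAlgebra.single (Finsupp.single (2 : Fin 3) (1 : ℚ)) (1 : ℂ) with hf
  have hpow : ∀ N : ℕ, 0 < N → ∀ i : Fin 3,
      polyEmb N ((MvPolynomial.X i : MvPolynomial (Fin 3) ℂ) ^ N) =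
        AddMonoidAlgebra.single (Finsupp.single i (1 : ℚ)) (1 : ℂ) := by
    intro N hN i
    rw [MvPolynomial.X_pow_eq_monomial, ← MvPolynomial.single_eq_monomial, polyEmb_single]
    congr 1
    ext j
    rw [expScale_apply]
    have : (N : ℚ) ≠ 0 := by positivity
    by_cases h : i = j <;> simp [Finsupp.single_apply, h, this]
  have hfN : ∀ N : ℕ, 0 < N → polyEmb N (MvPolynomial.X 0 ^ N + MvPolynomial.X 1 ^ N +
      MvPolynomial.X 2 ^ N : MvPolynomial (Fin 3) ℂ) = f := by
    intro N hN
    rw [map_add, map_add, hpow N hN, hpow N hN, hpow N hN]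
  have hunit : ∀ k, IsUnit (AddMonoidAlgebra.single (diagVec k) (1 : ℂ)) := by
    intro k
    refine IsUnit.of_mul_eq_one (AddMonoidAlgebra.single (-diagVec k) (1 : ℂ)) ?_
    rw [AddMonoidAlgebra.single_mul_single, add_neg_cancel, one_mul]
    rfl
  have hsq : ∀ k, AddMonoidAlgebra.single (diagVec k) (1 : ℂ) *
      AddMonoidAlgebra.single (diagVec k) (1 : ℂ) =
      AddMonoidAlgebra.single (diagVec (k + k)) (1 : ℂ) := by
    intro k
    rw [AddMonoidAlgebra.single_mul_single, one_mul]
    congr 1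
    ext i
    simp [diagVec]
  -- the core divisibility statement
  have core : ∀ a b, f ∣ a * b → f ∣ a ∨ f ∣ b := by
    rintro a b ⟨c, hc⟩
    obtain ⟨N1, k1, h1, H1⟩ := exists_range a
    obtain ⟨N2, k2, h2, H2⟩ := exists_range b
    obtain ⟨N3, k3, h3, H3⟩ := exists_range c
    have hN : 0 < N1 * N2 * N3 := by positivity
    obtain ⟨A, hA⟩ := H1 _ hN ⟨N2 * N3, by ring⟩ (k1 + k2 + k3) (by omega)
    obtain ⟨B, hB⟩ := H2 _ hN ⟨N1 * N3, by ring⟩ (k1 + k2 + k3) (by omega)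
    obtain ⟨C, hC⟩ := H3 _ hN ⟨N1 * N2, by ring⟩ ((k1 + k2 + k3) + (k1 + k2 + k3)) (by omega)
    have hdvd : (MvPolynomial.X 0 ^ (N1 * N2 * N3) + MvPolynomial.X 1 ^ (N1 * N2 * N3) +
      MvPolynomial.X 2 ^ (N1 * N2 * N3) : MvPolynomial (Fin 3) ℂ) ∣ A * B := by
      refine ⟨C, polyEmb_injective _ hN ?_⟩
      rw [map_mul, map_mul, hfN _ hN, hA, hB, hC, ← hsq]
      linear_combination (AddMonoidAlgebra.single (diagVec (k1 + k2 + k3)) (1 : ℂ) *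
        AddMonoidAlgebra.single (diagVec (k1 + k2 + k3)) (1 : ℂ)) * hc
    refine ((fermat_prime_s1 _ hN).dvd_or_dvd hdvd).imp (fun h => ?_) (fun h => ?_)
    · have := map_dvd (polyEmb (N1 * N2 * N3)) h
      rw [hfN _ hN, hA] at this
      exact (hunit _).dvd_mul_left.1 this
    · have := map_dvd (polyEmb (N1 * N2 * N3)) h
      rw [hfN _ hN, hB] at this
      exact (hunit _).dvd_mul_left.1 this
  refine Ideal.isPrime_iff.2 ⟨?_, ?_⟩
  · intro htop
    rw [Ideal.span_singleton_eq_top] at htop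
    -- the augmentation-type character: evaluate via powers
    obtain ⟨c, hc⟩ := htop.dvd (a := 1)
    obtain ⟨N3, k3, h3, H3⟩ := exists_range c
    obtain ⟨N1, k1, h1, H1⟩ := exists_range 1
    have hN : 0 < N1 * N3 := by positivity
    obtain ⟨A, hA⟩ := H1 _ hN ⟨N3, by ring⟩ (k1 + k3) (by omega)
    obtain ⟨C, hC⟩ := H3 _ hN ⟨N1, by ring⟩ (k1 + k3) (by omega)
    obtain ⟨ζ, hζ⟩ := IsAlgClosed.exists_pow_nat_eq (-2 : ℂ) hN
    have hζ0 : ζ ≠ 0 := by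
      rintro rfl
      rw [zero_pow hN.ne'] at hζ
      norm_num at hζ
    have hA' : A = (MvPolynomial.monomial
        (Finsupp.equivFunOnFinite.symm fun _ => (k1 + k3) * (N1 * N3)) (1 : ℂ)) := by
      apply polyEmb_injective _ hN
      rw [hA, mul_one, ← MvPolynomial.single_eq_monomial, polyEmb_single]
      congr 1
      ext i
      rw [expScale_apply]
      have : ((N1 * N3 : ℕ) : ℚ) ≠ 0 := by positivity
      simp only [diagVec, Finsupp.equivFunOnFinite_symm_apply_apply]
      rw [Nat.cast_mul (k1 + k3), mul_assoc, mul_inv_cancel₀ this, mul_one]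
    have hAC : A = (MvPolynomial.X 0 ^ (N1 * N3) + MvPolynomial.X 1 ^ (N1 * N3) +
      MvPolynomial.X 2 ^ (N1 * N3) : MvPolynomial (Fin 3) ℂ) * C := by
      apply polyEmb_injective _ hN
      rw [map_mul, hfN _ hN, hA, hC]
      linear_combination (AddMonoidAlgebra.single (diagVec (k1 + k3)) (1 : ℂ)) * hc
    have := congrArg (MvPolynomial.eval ![ζ, 1, 1]) (hA'.symm.trans hAC)
    rw [map_mul, map_add, map_add, map_pow, map_pow, map_pow, MvPolynomial.eval_monomial] at this
    simp [hζ, Finsupp.prod_fintype, Fin.prod_univ_three] at this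
    norm_num [hζ0] at this
  · intro a b hab
    rw [Ideal.mem_span_singleton] at *
    rw [Ideal.mem_span_singleton]
    exact core a b hab
end

section
/- For every integer k ≥ 1, the polynomial X₀^k + X₁^k + X₂^k is irreducible in the polynomial ring ℂ[X₀, X₁, X₂] (i.e. MvPolynomial (Fin 3) ℂ). -/
/-- For every integer `k ≥ 1`, the polynomial `X₀^k + X₁^k + X₂^k` is irreducible
in `ℂ[X₀, X₁, X₂]`. -/
theorem stmt2 (k : ℕ) (hk : 1 ≤ k) :
    Irreducible
      (MvPolynomial.X 0 ^ k + MvPolynomial.X 1 ^ k + MvPolynomial.X 2 ^ k :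
        MvPolynomial (Fin 3) ℂ) := by
  have hk0 : k ≠ 0 := by omega
  obtain ⟨ζ, hζ⟩ := IsAlgClosed.exists_pow_nat_eq (-1 : ℂ) (n := k) (by omega)
  have hζ0 : ζ ≠ 0 := by
    rintro rfl
    rw [zero_pow hk0] at hζ
    norm_num at hζ
  rw [← MulEquiv.irreducible_iff (MvPolynomial.finSuccEquiv ℂ 2)]
  set a : MvPolynomial (Fin 2) ℂ := MvPolynomial.X 0 ^ k + MvPolynomial.X 1 ^ k with ha
  have himg : MvPolynomial.finSuccEquiv ℂ 2
      (MvPolynomial.X 0 ^ k + MvPolynomial.X 1 ^ k + MvPolynomial.X 2 ^ k)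
      = Polynomial.X ^ k + Polynomial.C a := by
    have h1 : MvPolynomial.finSuccEquiv ℂ 2 (MvPolynomial.X 1)
        = Polynomial.C (MvPolynomial.X 0) :=
      MvPolynomial.finSuccEquiv_X_succ (n := 2) (j := 0)
    have h2 : MvPolynomial.finSuccEquiv ℂ 2 (MvPolynomial.X 2)
        = Polynomial.C (MvPolynomial.X 1) :=
      MvPolynomial.finSuccEquiv_X_succ (n := 2) (j := 1)
    simp only [map_add, map_pow, h1, h2, MvPolynomial.finSuccEquiv_X_zero, ha, add_assoc]
  rw [himg]
  let φ : MvPolynomial (Fin 2) ℂ →ₐ[ℂ] Polynomial ℂ :=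
    MvPolynomial.aeval ![Polynomial.C ζ * Polynomial.X, Polynomial.X]
  have hφ0 : φ (MvPolynomial.X 0) = Polynomial.C ζ * Polynomial.X := by simp [φ]
  have hφ1 : φ (MvPolynomial.X 1) = Polynomial.X := by simp [φ]
  have hP : (RingHom.ker φ).IsPrime := RingHom.ker_isPrime φ
  have hmon : (Polynomial.X ^ k + Polynomial.C a).Monic := Polynomial.monic_X_pow_add_C a hk0
  have hdeg : (Polynomial.X ^ k + Polynomial.C a).degree = (k : WithBot ℕ) :=
    Polynomial.degree_X_pow_add_C (by omega) a
  have haP : a ∈ RingHom.ker φ := by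
    rw [RingHom.mem_ker, ha, map_add, map_pow, map_pow, hφ0, hφ1, mul_pow, ← Polynomial.C_pow, hζ]
    simp
  refine Polynomial.irreducible_of_eisenstein_criterion hP ?_ ?_ ?_ ?_ hmon.isPrimitive
  · rw [hmon.leadingCoeff]
    exact fun h => hP.ne_top ((Ideal.eq_top_iff_one _).2 h)
  · intro n hn
    rw [hdeg] at hn
    have hn' : n < k := by exact_mod_cast hn
    rw [Polynomial.coeff_add, Polynomial.coeff_X_pow, if_neg hn'.ne, zero_add, Polynomial.coeff_C]
    split_ifs
    · exact haP
    · exact zero_mem _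
  · rw [hdeg]
    exact_mod_cast hk
  · have h0 : (Polynomial.X ^ k + Polynomial.C a).coeff 0 = a := by
      simp [Polynomial.coeff_X_pow, hk0.symm]
    rw [h0]
    intro hmem
    have key : ∀ x ∈ (RingHom.ker φ) ^ 2, MvPolynomial.pderiv 0 x ∈ RingHom.ker φ := by
      intro x hx
      rw [pow_two] at hx
      refine Submodule.mul_induction_on hx ?_ ?_
      · intro u hu v hv
        rw [Derivation.leibniz, smul_eq_mul, smul_eq_mul]
        exact add_mem (Ideal.mul_mem_right _ _ hu) (Ideal.mul_mem_right _ _ hv)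
      · intro u v hu hv
        rw [map_add]
        exact add_mem hu hv
    have h := key a hmem
    have hd : MvPolynomial.pderiv 0 a = (k : MvPolynomial (Fin 2) ℂ) * MvPolynomial.X 0 ^ (k - 1) := by
      simp [ha, MvPolynomial.pderiv_pow, MvPolynomial.pderiv_X_of_ne]
    rw [hd, RingHom.mem_ker, map_mul, map_pow, hφ0, map_natCast] at h
    have : (k : Polynomial ℂ) ≠ 0 := Nat.cast_ne_zero.2 hk0
    exact mul_ne_zero this (pow_ne_zero _ (mul_ne_zero (Polynomial.C_ne_zero.2 hζ0)
      Polynomial.X_ne_zero)) h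
end

section
/- Let R be an integral domain which is a ℚ-algebra, equipped with a map E : R → R satisfying E 0 = 1 and E(x + y) = E x · E y for all x, y ∈ R. Then there exists a map E' : K → K on the fraction field K of R satisfying E' 0 = 1 and E'(x + y) = E' x · E' y for all x, y ∈ K, and such that E'(φ(r)) = φ(E r) for every r ∈ R, where φ : R → K is the canonical embedding. -/
/-- Let `R` be an integral domain which is a `ℚ`-algebra, with an exponential map
`E : R → R` (i.e. `E 0 = 1` and `E (x + y) = E x * E y`). Then the exponential map
extends to the fraction field of `R`. -/
theorem stmt4 {R : Type*} [CommRing R] [IsDomain R] [Algebra ℚ R]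
    (E : R → R) (hE0 : E 0 = 1) (hEadd : ∀ x y : R, E (x + y) = E x * E y) :
    ∃ E' : FractionRing R → FractionRing R,
      E' 0 = 1 ∧ (∀ x y : FractionRing R, E' (x + y) = E' x * E' y) ∧
      ∀ r : R, E' (algebraMap R (FractionRing R) r) = algebraMap R (FractionRing R) (E r) := by
  obtain ⟨p, hp⟩ := LinearMap.exists_leftInverse_of_injective
    (IsScalarTower.toAlgHom ℚ R (FractionRing R)).toLinearMap
    (LinearMap.ker_eq_bot.2 (IsFractionRing.injective R (FractionRing R)))
  refine ⟨fun x => algebraMap R (FractionRing R) (E (p x)), ?_, ?_, ?_⟩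
  · simp [hE0]
  · intro x y
    simp [hEadd]
  · intro r
    have h : p (algebraMap R (FractionRing R) r) = r := LinearMap.congr_fun hp r
    simp only [h]
end

section
/- Let R be an E-ring and X ⊆ R a subset. Then Erad X = √[E] X; that is, the intersection of all prime E-ideals of R containing X (taken to be all of R if there are none) equals the union ⋃_{n ∈ ℕ} √[n] X of the inductively defined sets √[n] X. -/
/-- An E-ideal of an E-ring `(R, E)`: an ideal `I` such that `a ∈ I` implies `E a - 1 ∈ I`. -/
def IsEIdeal {R : Type*} [CommRing R] (E : R → R) (I : Ideal R) : Prop :=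
  ∀ a ∈ I, E a - 1 ∈ I

/-- `Erad E X` is the intersection of all prime E-ideals containing `X`
(all of `R` if there are none). -/
def Erad {R : Type*} [CommRing R] (E : R → R) (X : Set R) : Set R :=
  ⋂ I ∈ {I : Ideal R | I.IsPrime ∧ IsEIdeal E I ∧ X ⊆ ↑I}, (I : Set R)

/-- `eSpan E X` is the smallest E-ideal containing `X` (as a set: the intersection of
all E-ideals containing `X`). -/
def eSpan {R : Type*} [CommRing R] (E : R → R) (X : Set R) : Set R :=
  ⋂ I ∈ {I : Ideal R | IsEIdeal E I ∧ X ⊆ ↑I}, (I : Set R)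

/-- The operators `√[n]` on subsets of `R`, defined inductively:
`√[0] X` is the smallest E-ideal containing `X`, and
`√[n+1] X = √[n] {a | ∃ b₁ b₂, b₁ * b₂ ∈ √[n] X ∧ a ∈ √[n] (X ∪ {b₁}) ∩ √[n] (X ∪ {b₂})}`. -/
def nRad {R : Type*} [CommRing R] (E : R → R) : ℕ → Set R → Set R
  | 0, X => eSpan E X
  | n + 1, X => nRad E n {a | ∃ b₁ b₂ : R, b₁ * b₂ ∈ nRad E n X ∧
      a ∈ nRad E n (X ∪ {b₁}) ∩ nRad E n (X ∪ {b₂})}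

/-- `√[E] X = ⋃ n, √[n] X`. -/
def eRad {R : Type*} [CommRing R] (E : R → R) (X : Set R) : Set R :=
  ⋃ n : ℕ, nRad E n X

section Helpers

variable {R : Type*} [CommRing R] (E : R → R)

def eI (X : Set R) : Ideal R := sInf {I : Ideal R | IsEIdeal E I ∧ X ⊆ ↑I}

lemma eI_coe (X : Set R) : (eI E X : Set R) = eSpan E X := by
  simp [eI, eSpan]

lemma mem_eI {X : Set R} {a : R} :
    a ∈ eI E X ↔ ∀ I : Ideal R, IsEIdeal E I → X ⊆ ↑I → a ∈ I := by
  simp [eI, Submodule.mem_sInf]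

lemma eI_isE (X : Set R) : IsEIdeal E (eI E X) := by
  intro a ha
  rw [mem_eI] at ha ⊢
  intro I hI hX
  exact hI a (ha I hI hX)

lemma sub_eI (X : Set R) : X ⊆ eI E X := by
  intro a ha
  rw [SetLike.mem_coe, mem_eI]
  intro I hI hX
  exact hX ha

lemma eI_le {X : Set R} {I : Ideal R} (hI : IsEIdeal E I) (hX : X ⊆ I) : eI E X ≤ I := by
  intro a ha
  rw [mem_eI] at ha
  exact ha I hI hX

def stepSet (n : ℕ) (X : Set R) : Set R :=
  {a | ∃ b₁ b₂ : R, b₁ * b₂ ∈ nRad E n X ∧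
      a ∈ nRad E n (X ∪ {b₁}) ∩ nRad E n (X ∪ {b₂})}

lemma nRad_zero (X : Set R) : nRad E 0 X = eI E X := by
  rw [eI_coe]; rfl

lemma nRad_succ (n : ℕ) (X : Set R) : nRad E (n + 1) X = nRad E n (stepSet E n X) := rfl

lemma nRad_mono (n : ℕ) : ∀ {X Y : Set R}, X ⊆ Y → nRad E n X ⊆ nRad E n Y := by
  induction n with
  | zero =>
    intro X Y h
    rw [nRad_zero, nRad_zero]
    exact eI_le E (eI_isE E Y) (h.trans (sub_eI E Y))
  | succ n ih =>
    intro X Y h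
    rw [nRad_succ, nRad_succ]
    apply ih
    rintro a ⟨b₁, b₂, h0, h1, h2⟩
    exact ⟨b₁, b₂, ih h h0, ih (Set.union_subset_union_left _ h) h1,
      ih (Set.union_subset_union_left _ h) h2⟩

lemma stepSet_mono (n : ℕ) {X Y : Set R} (h : X ⊆ Y) : stepSet E n X ⊆ stepSet E n Y := by
  rintro a ⟨b₁, b₂, h0, h1, h2⟩
  exact ⟨b₁, b₂, nRad_mono E n h h0, nRad_mono E n (Set.union_subset_union_left _ h) h1,
      nRad_mono E n (Set.union_subset_union_left _ h) h2⟩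

lemma zero_mem_nRad (n : ℕ) : ∀ X : Set R, (0 : R) ∈ nRad E n X := by
  induction n with
  | zero => intro X; rw [nRad_zero]; exact (eI E X).zero_mem
  | succ n ih => intro X; exact ih _

lemma sub_nRad (n : ℕ) : ∀ X : Set R, X ⊆ nRad E n X := by
  induction n with
  | zero => intro X; rw [nRad_zero]; exact sub_eI E X
  | succ n ih =>
    intro X x hx
    refine ih _ ⟨0, 0, ?_, ih _ (Or.inl hx), ih _ (Or.inl hx)⟩
    rw [mul_zero]; exact zero_mem_nRad E n X

lemma nRad_sub_stepSet (n : ℕ) (X : Set R) : nRad E n X ⊆ stepSet E n X := by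
  intro a ha
  refine ⟨0, 0, ?_, nRad_mono E n Set.subset_union_left ha,
    nRad_mono E n Set.subset_union_left ha⟩
  rw [mul_zero]; exact zero_mem_nRad E n X

lemma nRad_le_succ (n : ℕ) (X : Set R) : nRad E n X ⊆ nRad E (n + 1) X :=
  (nRad_sub_stepSet E n X).trans (sub_nRad E n _)

lemma nRad_le {m n : ℕ} (h : m ≤ n) (X : Set R) : nRad E m X ⊆ nRad E n X :=
  monotone_nat_of_le_succ (f := fun n => nRad E n X) (fun n => nRad_le_succ E n X) h

lemma eI_mono {X Y : Set R} (h : X ⊆ Y) : eI E X ≤ eI E Y :=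
  eI_le E (eI_isE E Y) (h.trans (sub_eI E Y))

lemma nRad_eI (n : ℕ) : ∀ X : Set R, nRad E n (eI E X) ⊆ nRad E n X := by
  induction n with
  | zero =>
    intro X
    rw [nRad_zero, nRad_zero]
    exact eI_le E (eI_isE E X) (le_refl _)
  | succ n ih =>
    intro X
    rw [nRad_succ, nRad_succ]
    have key : ∀ b : R, nRad E n (↑(eI E X) ∪ {b}) ⊆ nRad E n (X ∪ {b}) := by
      intro b
      refine (nRad_mono E n ?_).trans (ih _)
      refine Set.union_subset ?_ (Set.subset_union_right.trans (sub_eI E _))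
      exact eI_mono E Set.subset_union_left
    apply nRad_mono
    rintro a ⟨b₁, b₂, h0, h1, h2⟩
    exact ⟨b₁, b₂, ih _ h0, key _ h1, key _ h2⟩

lemma nRad_directed {ι : Type*} [Nonempty ι] (n : ℕ) :
    ∀ (Y : ι → Set R), Directed (· ⊆ ·) Y → ∀ a ∈ nRad E n (⋃ i, Y i), ∃ i, a ∈ nRad E n (Y i) := by
  induction n with
  | zero =>
    intro Y hY a ha
    simp only [nRad_zero, SetLike.mem_coe] at ha ⊢
    have hd : Directed (· ≤ ·) (fun i => eI E (Y i)) := by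
      intro i j
      obtain ⟨k, h1, h2⟩ := hY i j
      exact ⟨k, eI_mono E h1, eI_mono E h2⟩
    have hle : eI E (⋃ i, Y i) ≤ ⨆ i, eI E (Y i) := by
      apply eI_le
      · intro x hx
        rw [Submodule.mem_iSup_of_directed _ hd] at hx ⊢
        obtain ⟨i, hi⟩ := hx
        exact ⟨i, eI_isE E _ x hi⟩
      · apply Set.iUnion_subset
        intro i
        exact (sub_eI E _).trans (le_iSup (fun i => eI E (Y i)) i)
    exact (Submodule.mem_iSup_of_directed _ hd).1 (hle ha)
  | succ n ih =>
    intro Y hY a ha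
    simp only [nRad_succ] at ha ⊢
    apply ih
    · intro i j
      obtain ⟨k, h1, h2⟩ := hY i j
      exact ⟨k, stepSet_mono E n h1, stepSet_mono E n h2⟩
    · refine nRad_mono E n ?_ ha
      rintro c ⟨b₁, b₂, h0, h1, h2⟩
      have key : ∀ b : R, c ∈ nRad E n ((⋃ i, Y i) ∪ {b}) → ∃ i, c ∈ nRad E n (Y i ∪ {b}) := by
        intro b hc
        rw [Set.iUnion_union] at hc
        refine ih (fun i => Y i ∪ {b}) ?_ c hc
        intro i j
        obtain ⟨k, h1, h2⟩ := hY i j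
        exact ⟨k, Set.union_subset_union_left _ h1, Set.union_subset_union_left _ h2⟩
      obtain ⟨i, hi⟩ := ih Y hY _ h0
      obtain ⟨j, hj⟩ := key _ h1
      obtain ⟨k, hk⟩ := key _ h2
      obtain ⟨l, hl1, hl2⟩ := hY i j
      obtain ⟨m, hm1, hm2⟩ := hY l k
      exact Set.mem_iUnion.2 ⟨m, b₁, b₂, nRad_mono E n (hl1.trans hm1) hi,
        nRad_mono E n (Set.union_subset_union_left _ (hl2.trans hm1)) hj,
        nRad_mono E n (Set.union_subset_union_left _ hm2) hk⟩

lemma nRad_sub_prime {I : Ideal R} (hp : I.IsPrime) (hI : IsEIdeal E I) (n : ℕ) :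
    ∀ X : Set R, X ⊆ I → nRad E n X ⊆ I := by
  induction n with
  | zero =>
    intro X hX
    rw [nRad_zero]
    exact eI_le E hI hX
  | succ n ih =>
    intro X hX
    rw [nRad_succ]
    apply ih
    rintro a ⟨b₁, b₂, h0, h1, h2⟩
    rcases hp.mem_or_mem (ih X hX h0) with h | h
    · exact ih _ (Set.union_subset hX (Set.singleton_subset_iff.2 h)) h1
    · exact ih _ (Set.union_subset hX (Set.singleton_subset_iff.2 h)) h2

lemma exists_prime {X : Set R} {a : R} (ha : ∀ n, a ∉ nRad E n X) :
    ∃ I : Ideal R, I.IsPrime ∧ IsEIdeal E I ∧ X ⊆ I ∧ a ∉ I := by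
  obtain ⟨Y, hXY, hY⟩ := zorn_subset_nonempty {Y : Set R | ∀ n, a ∉ nRad E n Y} (by
    intro c hc hchain hne
    refine ⟨⋃₀ c, ?_, fun s hs => Set.subset_sUnion_of_mem hs⟩
    intro n hn
    rw [Set.sUnion_eq_iUnion] at hn
    haveI : Nonempty c := hne.to_subtype
    obtain ⟨⟨s, hs⟩, h⟩ := nRad_directed E n (fun s : c => (s : Set R))
      hchain.directedOn.directed_val a hn
    exact hc hs n h) X ha
  have hmax : ∀ Z, (∀ n, a ∉ nRad E n Z) → Y ⊆ Z → Z ⊆ Y := fun Z hZ h => hY.2 hZ h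
  have hYa : ∀ n, a ∉ nRad E n Y := hY.1
  have hsub : (eI E Y : Set R) ⊆ Y :=
    hmax _ (fun n hn => hYa n (nRad_eI E n Y hn)) (sub_eI E Y)
  have hb : ∀ b, b ∉ Y → ∃ n, a ∈ nRad E n (Y ∪ {b}) := by
    intro b hb
    by_contra! h
    exact hb (hmax _ h Set.subset_union_left (Or.inr rfl))
  have haI : a ∉ eI E Y := fun h => hYa 0 (sub_nRad E 0 Y (hsub h))
  refine ⟨eI E Y, ⟨?_, ?_⟩, eI_isE E Y, hXY.trans (sub_eI E Y), haI⟩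
  · intro h
    rw [h] at haI
    exact haI trivial
  · intro x y hxy
    by_contra! h
    obtain ⟨m, hm⟩ := hb x fun hx => h.1 (sub_eI E Y hx)
    obtain ⟨n, hn⟩ := hb y fun hx => h.2 (sub_eI E Y hx)
    refine hYa (max m n + 1) (sub_nRad E (max m n) _ ⟨x, y, sub_nRad E _ Y (hsub hxy), ?_, ?_⟩)
    · exact nRad_le E (le_max_left m n) _ hm
    · exact nRad_le E (le_max_right m n) _ hn

end Helpers

/-- For an E-ring `R` and a subset `X ⊆ R`, `Erad X = √[E] X`. -/
theorem stmt5 {R : Type*} [CommRing R] (E : R → R)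
    (hE0 : E 0 = 1) (hEadd : ∀ x y : R, E (x + y) = E x * E y) (X : Set R) :
    Erad E X = eRad E X := by
  ext a
  simp only [Erad, eRad, Set.mem_iInter, Set.mem_iUnion, Set.mem_setOf_eq]
  constructor
  · intro h
    by_contra! hn
    obtain ⟨I, hp, hI, hX, ha⟩ := exists_prime E hn
    exact ha (h I ⟨hp, hI, hX⟩)
  · rintro ⟨n, hn⟩ I ⟨hp, hI, hX⟩
    exact nRad_sub_prime E hp hI n X hX hn
end

section
/- Let R be an E-ring, J ⊆ R a subset, and b₁, b₂ ∈ R with b₁·b₂ ∈ J. If a ∈ Erad(J ∪ {b₁}) ∩ Erad(J ∪ {b₂}), then a ∈ Erad J. -/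
/-- If `b₁ * b₂ ∈ J` and `a ∈ Erad (J ∪ {b₁}) ∩ Erad (J ∪ {b₂})`, then `a ∈ Erad J`. -/
theorem stmt6 {R : Type*} [CommRing R] (E : R → R)
    (hE0 : E 0 = 1) (hEadd : ∀ x y : R, E (x + y) = E x * E y)
    (J : Set R) (a b₁ b₂ : R) (hb : b₁ * b₂ ∈ J)
    (ha : a ∈ Erad E (J ∪ {b₁}) ∩ Erad E (J ∪ {b₂})) :
    a ∈ Erad E J := by
  obtain ⟨h1, h2⟩ := ha
  simp only [Erad, Set.mem_iInter, Set.mem_setOf_eq] at h1 h2 ⊢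
  rintro I ⟨hp, hI, hJ⟩
  rcases hp.mem_or_mem (hJ hb) with h | h
  · exact h1 I ⟨hp, hI, Set.union_subset hJ (Set.singleton_subset_iff.mpr h)⟩
  · exact h2 I ⟨hp, hI, Set.union_subset hJ (Set.singleton_subset_iff.mpr h)⟩
end

section
/- Let R be an E-ring and a ∈ R. Let P be an E-ideal of R which is maximal with respect to inclusion among the E-ideals J of R satisfying √[E] J = J and a ∉ J. Then P is a prime ideal of R. -/
theorem eSpan_isEIdeal_aux {R : Type*} [CommRing R] (E : R → R) (X : Set R) :
    ∃ I : Ideal R, IsEIdeal E I ∧ (I : Set R) = eSpan E X := by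
  refine ⟨sInf {I : Ideal R | IsEIdeal E I ∧ X ⊆ ↑I}, ?_, ?_⟩
  · intro a ha
    rw [Ideal.mem_sInf] at ha ⊢
    intro I hI
    exact hI.1 a (ha hI)
  · ext x
    simp [eSpan, Ideal.mem_sInf]

theorem subset_eSpan_aux {R : Type*} [CommRing R] (E : R → R) (X : Set R) :
    X ⊆ eSpan E X := by
  intro x hx
  simp only [eSpan, Set.mem_iInter]
  intro I hI
  exact hI.2 hx

theorem eSpan_subset_aux {R : Type*} [CommRing R] (E : R → R) (X : Set R) (I : Ideal R)
    (hI : IsEIdeal E I) (h : X ⊆ I) : eSpan E X ⊆ I := by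
  intro x hx
  simp only [eSpan, Set.mem_iInter] at hx
  exact hx I ⟨hI, h⟩

theorem nRad_mono_aux {R : Type*} [CommRing R] (E : R → R) (n : ℕ) :
    ∀ X Y : Set R, X ⊆ Y → nRad E n X ⊆ nRad E n Y := by
  induction n with
  | zero =>
    intro X Y h
    obtain ⟨I, hI, hIe⟩ := eSpan_isEIdeal_aux E Y
    simp only [nRad]
    rw [← hIe]
    refine eSpan_subset_aux E X I hI ?_
    rw [hIe]
    exact h.trans (subset_eSpan_aux E Y)
  | succ n ih =>
    intro X Y h
    simp only [nRad]
    apply ih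
    rintro a ⟨b₁, b₂, h1, h2, h3⟩
    exact ⟨b₁, b₂, ih _ _ h h1, ih _ _ (Set.union_subset_union_left _ h) h2,
      ih _ _ (Set.union_subset_union_left _ h) h3⟩

theorem nRad_zero_mem_aux {R : Type*} [CommRing R] (E : R → R) (n : ℕ) :
    ∀ X : Set R, (0 : R) ∈ nRad E n X := by
  induction n with
  | zero =>
    intro X
    obtain ⟨I, hI, hIe⟩ := eSpan_isEIdeal_aux E X
    simp only [nRad]
    rw [← hIe]
    exact I.zero_mem
  | succ n ih =>
    intro X
    exact ih _

theorem nRad_subset_step_aux {R : Type*} [CommRing R] (E : R → R) (n : ℕ) (X : Set R) :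
    nRad E n X ⊆ {a | ∃ b₁ b₂ : R, b₁ * b₂ ∈ nRad E n X ∧
      a ∈ nRad E n (X ∪ {b₁}) ∩ nRad E n (X ∪ {b₂})} := by
  intro a ha
  refine ⟨0, 0, ?_, ?_, ?_⟩
  · rw [mul_zero]
    exact nRad_zero_mem_aux E n X
  · exact nRad_mono_aux E n _ _ Set.subset_union_left ha
  · exact nRad_mono_aux E n _ _ Set.subset_union_left ha

theorem nRad_nRad_aux {R : Type*} [CommRing R] (E : R → R) (n : ℕ) (X : Set R) :
    nRad E n (nRad E n X) ⊆ nRad E (n + 1) X :=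
  nRad_mono_aux E n _ _ (nRad_subset_step_aux E n X)

theorem subset_nRad_aux {R : Type*} [CommRing R] (E : R → R) (n : ℕ) :
    ∀ X : Set R, X ⊆ nRad E n X := by
  induction n with
  | zero => exact subset_eSpan_aux E
  | succ n ih =>
    intro X
    exact ((ih X).trans (ih _)).trans (nRad_nRad_aux E n X)

theorem nRad_monotone_aux {R : Type*} [CommRing R] (E : R → R) (X : Set R) :
    Monotone fun n => nRad E n X :=
  monotone_nat_of_le_succ fun n => (subset_nRad_aux E n _).trans (nRad_nRad_aux E n X)

theorem nRad_iUnion_aux {R : Type*} [CommRing R] (E : R → R) (n : ℕ) :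
    ∀ F : ℕ → Set R, Monotone F → nRad E n (⋃ k, F k) ⊆ ⋃ k, nRad E n (F k) := by
  induction n with
  | zero =>
    intro F hF
    simp only [nRad]
    choose I hI hIe using fun k => eSpan_isEIdeal_aux E (F k)
    have hmono : Monotone I := by
      intro k l hkl
      have := nRad_mono_aux E 0 _ _ (hF hkl)
      simp only [nRad] at this
      rw [← hIe, ← hIe] at this
      exact this
    have hmem : ∀ x, x ∈ (⨆ k, I k) ↔ ∃ k, x ∈ I k := fun x =>
      Submodule.mem_iSup_of_directed I hmono.directed_le
    intro x hx
    have h1 : x ∈ ((⨆ k, I k : Ideal R) : Set R) := by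
      refine eSpan_subset_aux E _ _ ?_ ?_ hx
      · intro a ha
        rw [hmem] at ha ⊢
        obtain ⟨k, hk⟩ := ha
        exact ⟨k, hI k a hk⟩
      · intro y hy
        obtain ⟨k, hk⟩ := Set.mem_iUnion.1 hy
        refine (hmem y).2 ⟨k, ?_⟩
        have := subset_eSpan_aux E _ hk
        rw [← hIe] at this
        exact this
    obtain ⟨k, hk⟩ := (hmem x).1 h1
    refine Set.mem_iUnion.2 ⟨k, ?_⟩
    rw [← hIe]
    exact hk
  | succ n ih =>
    intro F hF
    simp only [nRad]
    refine (nRad_mono_aux E n _ _ ?_).trans (ih (fun k => {a | ∃ b₁ b₂ : R,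
      b₁ * b₂ ∈ nRad E n (F k) ∧
      a ∈ nRad E n (F k ∪ {b₁}) ∩ nRad E n (F k ∪ {b₂})}) ?_)
    · rintro a ⟨b₁, b₂, h1, h2, h3⟩
      have hu : ∀ b : R, Monotone fun k => F k ∪ {b} := fun b k l hkl =>
        Set.union_subset_union_left _ (hF hkl)
      rw [Set.iUnion_union] at h2 h3
      obtain ⟨i, hi⟩ := Set.mem_iUnion.1 (ih _ hF h1)
      obtain ⟨j, hj⟩ := Set.mem_iUnion.1 (ih _ (hu b₁) h2)
      obtain ⟨k, hk⟩ := Set.mem_iUnion.1 (ih _ (hu b₂) h3)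
      refine Set.mem_iUnion.2 ⟨max i (max j k), b₁, b₂, ?_, ?_, ?_⟩
      · exact nRad_mono_aux E n _ _ (hF (by omega)) hi
      · exact nRad_mono_aux E n _ _ (hu b₁ (by omega)) hj
      · exact nRad_mono_aux E n _ _ (hu b₂ (by omega)) hk
    · rintro k l hkl a ⟨b₁, b₂, h1, h2, h3⟩
      have h := hF hkl
      exact ⟨b₁, b₂, nRad_mono_aux E n _ _ h h1,
        nRad_mono_aux E n _ _ (Set.union_subset_union_left _ h) h2,
        nRad_mono_aux E n _ _ (Set.union_subset_union_left _ h) h3⟩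

theorem subset_eRad_aux {R : Type*} [CommRing R] (E : R → R) (X : Set R) :
    X ⊆ eRad E X := fun _ hx =>
  Set.mem_iUnion.2 ⟨0, subset_nRad_aux E 0 X hx⟩

theorem eRad_eRad_aux {R : Type*} [CommRing R] (E : R → R) (X : Set R) :
    eRad E (eRad E X) = eRad E X := by
  refine Set.Subset.antisymm ?_ (subset_eRad_aux E _)
  intro x hx
  obtain ⟨m, hm⟩ := Set.mem_iUnion.1 hx
  obtain ⟨k, hk⟩ := Set.mem_iUnion.1 (nRad_iUnion_aux E m _ (nRad_monotone_aux E X) hm)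
  refine Set.mem_iUnion.2 ⟨max m k + 1, nRad_nRad_aux E _ X ?_⟩
  exact nRad_mono_aux E _ _ _ (nRad_monotone_aux E X (le_max_right m k))
    (nRad_monotone_aux E _ (le_max_left m k) hk)

theorem eRad_ideal_aux {R : Type*} [CommRing R] (E : R → R) (X : Set R) :
    ∃ I : Ideal R, IsEIdeal E I ∧ (I : Set R) = eRad E X := by
  obtain ⟨I, hI, hIe⟩ := eSpan_isEIdeal_aux E (eRad E X)
  refine ⟨I, hI, ?_⟩
  rw [hIe]
  refine Set.Subset.antisymm ?_ (subset_eSpan_aux E _)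
  intro x hx
  rw [← eRad_eRad_aux]
  exact Set.mem_iUnion.2 ⟨0, hx⟩

/-- Let `a ∈ R` and let `P` be an E-ideal maximal (w.r.t. inclusion) among the E-ideals
`J` of `R` with `√[E] J = J` and `a ∉ J`. Then `P` is prime. -/
theorem stmt7 {R : Type*} [CommRing R] (E : R → R)
    (hE0 : E 0 = 1) (hEadd : ∀ x y : R, E (x + y) = E x * E y)
    (a : R) (P : Ideal R) (hP : IsEIdeal E P)
    (hPfix : eRad E (P : Set R) = (P : Set R)) (haP : a ∉ P)
    (hmax : ∀ J : Ideal R, IsEIdeal E J → eRad E (J : Set R) = (J : Set R) → a ∉ J →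
      P ≤ J → J = P) :
    P.IsPrime := by
  have key : ∀ b : R, b ∉ P → ∃ n, a ∈ nRad E n ((P : Set R) ∪ {b}) := by
    intro b hb
    by_contra hcon
    obtain ⟨J, hJ, hJe⟩ := eRad_ideal_aux E ((P : Set R) ∪ {b})
    have hsub : (P : Set R) ∪ {b} ⊆ (J : Set R) := hJe ▸ subset_eRad_aux E _
    have hJP : J = P := by
      refine hmax J hJ ?_ ?_ ?_
      · rw [hJe, eRad_eRad_aux]
      · intro haJ
        have h1 : a ∈ (J : Set R) := haJ
        rw [hJe] at h1
        exact hcon (Set.mem_iUnion.1 h1)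
      · intro x hx
        exact hsub (Or.inl hx)
    apply hb
    rw [← hJP]
    exact hsub (Or.inr rfl)
  refine ⟨?_, ?_⟩
  · intro h
    rw [h] at haP
    exact haP Submodule.mem_top
  · intro x y hxy
    by_contra hcon
    rw [not_or] at hcon
    obtain ⟨n, hn⟩ := key x hcon.1
    obtain ⟨m, hm⟩ := key y hcon.2
    apply haP
    have : a ∈ eRad E (P : Set R) := by
      refine Set.mem_iUnion.2 ⟨max n m + 1, subset_nRad_aux E (max n m) _ ?_⟩
      exact ⟨x, y, subset_nRad_aux E _ _ hxy, nRad_monotone_aux E _ (le_max_left n m) hn,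
        nRad_monotone_aux E _ (le_max_right n m) hm⟩
    rw [hPfix] at this
    exact this
end

section
/- For each positive integer n, let V_n = { z ∈ ℂ : exp(z / n!) = 1 }. Then V_n = { 2·π·i·n!·k : k ∈ ℤ } for every n ≥ 1, and V_{n+1} ⊊ V_n for every n ≥ 1; in particular, (V_n)_{n ≥ 1} is a strictly decreasing infinite chain of subsets of ℂ, so ℂ with the exponential Zariski topology is not a Noetherian topological space. -/
open Complex

lemma V_eq (n : ℕ) : {z : ℂ | Complex.exp (z / (n.factorial : ℂ)) = 1} =
    {z : ℂ | ∃ k : ℤ, z = 2 * (Real.pi : ℂ) * Complex.I * (n.factorial : ℂ) * (k : ℂ)} := by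
  have hn : (n.factorial : ℂ) ≠ 0 := by exact_mod_cast n.factorial_ne_zero
  ext z
  simp only [Set.mem_setOf_eq, Complex.exp_eq_one_iff]
  refine exists_congr fun k => ?_
  rw [div_eq_iff hn]
  constructor <;> intro h <;> rw [h] <;> ring

/-- For `n ≥ 1`, the zero set `V n = {z ∈ ℂ : exp (z / n!) = 1}` equals
`{2 π i n! k : k ∈ ℤ}`, and the chain `(V n)` is strictly decreasing:
`V (n+1) ⊊ V n` for all `n ≥ 1`. -/
theorem stmt9 :
    (∀ n : ℕ, 1 ≤ n →
      {z : ℂ | Complex.exp (z / (n.factorial : ℂ)) = 1} =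
        {z : ℂ | ∃ k : ℤ, z = 2 * (Real.pi : ℂ) * Complex.I * (n.factorial : ℂ) * (k : ℂ)}) ∧
    (∀ n : ℕ, 1 ≤ n →
      {z : ℂ | Complex.exp (z / ((n + 1).factorial : ℂ)) = 1} ⊂
        {z : ℂ | Complex.exp (z / (n.factorial : ℂ)) = 1}) := by
  refine ⟨fun n _ => V_eq n, fun n hn => ?_⟩
  rw [V_eq, V_eq, Set.ssubset_iff_subset_ne]
  constructor
  · rintro z ⟨k, rfl⟩
    refine ⟨(n + 1) * k, ?_⟩
    rw [Nat.factorial_succ]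
    push_cast
    ring
  · intro h
    have hmem : 2 * (Real.pi : ℂ) * Complex.I * (n.factorial : ℂ) ∈
        {z : ℂ | ∃ k : ℤ, z = 2 * (Real.pi : ℂ) * Complex.I * (n.factorial : ℂ) * (k : ℂ)} :=
      ⟨1, by simp⟩
    rw [← h] at hmem
    obtain ⟨k, hk⟩ := hmem
    have h0 : 2 * (Real.pi : ℂ) * Complex.I * (n.factorial : ℂ) ≠ 0 :=
      mul_ne_zero Complex.two_pi_I_ne_zero (by exact_mod_cast n.factorial_ne_zero)
    have h1 : (1 : ℂ) = ((n : ℂ) + 1) * k := by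
      apply mul_left_cancel₀ h0
      rw [Nat.factorial_succ] at hk
      push_cast at hk
      linear_combination hk
    have h2 : (1 : ℤ) = ((n : ℤ) + 1) * k := by exact_mod_cast h1
    have h3 : ((n : ℤ) + 1) ∣ 1 := ⟨k, h2⟩
    have := Int.le_of_dvd one_pos h3
    omega
end
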